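/- There exists a computable sequence y : ℕ → ℚ of rational numbers with 0 ≤ y_i ≤ 1 for all i, such that there is no computable strictly monotone function f : ℕ → ℕ for which the subsequence (y_{f(j)})_{j∈ℕ} is a Cauchy sequence (i.e. such that for every n there exists s with |y_{f(v)} − y_{f(w)}| < 2^{−n} for all v, w ≥ s). -/

import Mathlib

namespace NoCauchy
open Encodable Nat.Partrec

/-! ### The encoding of `ℚ` is computable from numerator and denominator -/

theorem encode_rat (q : ℚ) :
    ∃ _inst : DecidablePred (· ∈ Set.range (@encode ℚ Rat.instEncodable)),
      @encode ℚ Primcodable.toEncodable q =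
        (List.range (@encode ℚ Rat.instEncodable q)).countP
          (fun m => m ∈ Set.range (@encode ℚ Rat.instEncodable)) := ⟨_, rfl⟩

theorem encode_rat_pair (q : ℚ) :
    @encode ℚ Rat.instEncodable q = Nat.pair (@encode ℤ _ q.num) q.den := rfl

theorem encode_ofNat (n : ℕ) : @encode ℤ _ (n : ℤ) = 2 * n := rfl

theorem encode_negSucc (n : ℕ) : @encode ℤ _ (Int.negSucc n) = 2 * n + 1 := rfl

theorem natAbs_eq (z : ℤ) : (@encode ℤ _ z + 1) / 2 = z.natAbs := by
  cases z with
  | ofNat n =>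
    have := encode_ofNat n
    simp only [Int.ofNat_eq_natCast, Int.natAbs_natCast]
    omega
  | negSucc n =>
    have := encode_negSucc n
    simp only [Int.natAbs_negSucc]
    omega

theorem encode_int_surj (a : ℕ) : ∃ z : ℤ, @encode ℤ _ z = a := by
  rcases Nat.even_or_odd' a with ⟨k, rfl | rfl⟩
  · exact ⟨k, encode_ofNat k⟩
  · exact ⟨Int.negSucc k, encode_negSucc k⟩

/-- the codes of rationals -/
def Valid (m : ℕ) : Prop :=
  0 < m.unpair.2 ∧ ∀ x < (m.unpair.1 + 1) / 2 + m.unpair.2 + 1,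
    ¬ (((m.unpair.1 + 1) / 2) % x = 0 ∧ m.unpair.2 % x = 0 ∧ x ≠ 1)

theorem valid_iff_coprime (m : ℕ) :
    Valid m ↔ 0 < m.unpair.2 ∧ Nat.Coprime ((m.unpair.1 + 1) / 2) m.unpair.2 := by
  unfold Valid
  refine and_congr_right fun hb => ?_
  generalize (m.unpair.1 + 1) / 2 = a
  generalize m.unpair.2 = b at *
  constructor
  · intro h
    by_contra hne
    refine h (Nat.gcd a b) ?_ ⟨?_, ?_, hne⟩
    · have := Nat.gcd_le_right a hb
      omega
    · exact Nat.mod_eq_zero_of_dvd (Nat.gcd_dvd_left a b)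
    · exact Nat.mod_eq_zero_of_dvd (Nat.gcd_dvd_right a b)
  · rintro h x - ⟨h1, h2, h3⟩
    exact h3 (Nat.eq_one_of_dvd_coprimes h (Nat.dvd_of_mod_eq_zero h1) (Nat.dvd_of_mod_eq_zero h2))

theorem valid_iff (m : ℕ) : m ∈ Set.range (@encode ℚ Rat.instEncodable) ↔ Valid m := by
  rw [valid_iff_coprime]
  constructor
  · rintro ⟨q, rfl⟩
    rw [encode_rat_pair, Nat.unpair_pair]
    refine ⟨q.den_pos, ?_⟩
    simp only [natAbs_eq]
    exact q.reduced
  · rintro ⟨h1, h2⟩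
    obtain ⟨z, hz⟩ := encode_int_surj m.unpair.1
    rw [← hz, natAbs_eq] at h2
    refine ⟨⟨z, m.unpair.2, h1.ne', h2⟩, ?_⟩
    rw [encode_rat_pair, hz, Nat.pair_unpair]

theorem primrec_valid : PrimrecPred Valid := by
  have ha : Primrec fun m : ℕ => (m.unpair.1 + 1) / 2 :=
    Primrec.nat_div.comp (Primrec.succ.comp (Primrec.fst.comp Primrec.unpair)) (Primrec.const 2)
  have hb : Primrec fun m : ℕ => m.unpair.2 := Primrec.snd.comp Primrec.unpair
  have hR : PrimrecRel fun (x m : ℕ) =>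
      ¬ (((m.unpair.1 + 1) / 2) % x = 0 ∧ m.unpair.2 % x = 0 ∧ x ≠ 1) := by
    refine PrimrecPred.not (PrimrecPred.and ?_ (PrimrecPred.and ?_ (PrimrecPred.not ?_)))
    · exact Primrec.eq.comp (Primrec.nat_mod.comp (ha.comp Primrec.snd) Primrec.fst)
        (Primrec.const 0)
    · exact Primrec.eq.comp (Primrec.nat_mod.comp (hb.comp Primrec.snd) Primrec.fst)
        (Primrec.const 0)
    · exact Primrec.eq.comp Primrec.fst (Primrec.const 1)
  refine PrimrecPred.and (Primrec.nat_lt.comp (Primrec.const 0) hb) ?_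
  exact hR.forall_lt.comp (Primrec.succ.comp (Primrec.nat_add.comp ha hb)) Primrec.id

open Classical in
theorem encode_rat_eq (q : ℚ) :
    @encode ℚ Primcodable.toEncodable q =
      ((List.range (Nat.pair (@encode ℤ _ q.num) q.den)).filter (fun m => Valid m)).length := by
  obtain ⟨_, h⟩ := encode_rat q
  rw [h, ← List.countP_eq_length_filter, encode_rat_pair]
  congr 1
  funext m
  simp only [valid_iff]

theorem primrec_div {n d : ℕ → ℕ} (hn : Primrec n) (hd : Primrec d) (h0 : ∀ i, 0 < d i)
    (hc : ∀ i, Nat.Coprime (n i) (d i)) : Primrec fun i => (n i : ℚ) / d i := by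
  classical
  refine Primrec.encode_iff.1 ?_
  refine ((Primrec.list_length.comp ((Primrec.listFilter primrec_valid).comp
    (Primrec.list_range.comp (Primrec₂.natPair.comp
      (Primrec.nat_mul.comp (Primrec.const 2) hn) hd))))).of_eq fun i => ?_
  rw [encode_rat_eq]
  have h1 : ((n i : ℚ) / d i).num = n i := by
    have := Rat.num_div_eq_of_coprime (a := n i) (b := d i) (by exact_mod_cast h0 i) (hc i)
    simpa only [Int.cast_natCast, Nat.cast_inj] using this
  have h2 : ((n i : ℚ) / d i).den = d i := by
    have := Rat.den_div_eq_of_coprime (a := n i) (b := d i) (by exact_mod_cast h0 i) (hc i)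
    simp only [Int.cast_natCast] at this
    exact Nat.cast_injective (R := ℤ) this
  rw [h1, h2, encode_ofNat]

/-! ### The diagonal family of digits -/

/-- value of program `e` at `j` within `i` steps, `i` if undefined -/
def val (e i j : ℕ) : ℕ := (Code.evaln i (Denumerable.ofNat Code e) j).getD i

/-- value at the largest argument `j ≤ i` with value below `i` -/
def pt (e i : ℕ) : ℕ := val e i (Nat.findGreatest (fun j => val e i j < i) i)

/-- diagonal digits -/
def R (e i : ℕ) : ℕ := if h : pt e i < i then 1 - R e (pt e i) else 0
termination_by i

theorem R_le (e i : ℕ) : R e i ≤ 1 := by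
  rw [R]; split <;> omega

theorem primrec_val : Primrec fun a : (ℕ × ℕ) × ℕ => val a.1.1 a.1.2 a.2 := by
  refine Primrec.option_getD.comp (Code.primrec_evaln.comp (Primrec.pair (Primrec.pair
    (Primrec.snd.comp Primrec.fst) ((Primrec.ofNat Code).comp (Primrec.fst.comp Primrec.fst)))
      Primrec.snd)) (Primrec.snd.comp Primrec.fst)

theorem primrec_pt : Primrec₂ pt := by
  have h : Primrec fun a : ℕ × ℕ =>
      Nat.findGreatest (fun j => val a.1 a.2 j < a.2) a.2 := by
    refine Primrec.nat_findGreatest (p := fun (a : ℕ × ℕ) j => val a.1 a.2 j < a.2)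
      Primrec.snd ?_
    exact Primrec.nat_lt.comp primrec_val (Primrec.snd.comp Primrec.fst)
  exact primrec_val.comp (Primrec.pair Primrec.id h)

theorem primrec_R : Primrec₂ R := by
  have hp : Primrec fun a : ℕ × List ℕ => a.2[pt a.1 a.2.length]? :=
    Primrec.list_getElem?.comp Primrec.snd
      (primrec_pt.comp Primrec.fst (Primrec.list_length.comp Primrec.snd))
  refine Primrec.nat_strong_rec R
    (g := fun e L => some (1 - (L[pt e L.length]?).getD 1)) ?_ ?_
  · exact Primrec.option_some.comp (Primrec.nat_sub.comp (Primrec.const 1)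
      (Primrec.option_getD.comp hp (Primrec.const 1)))
  · intro e i
    rw [R]
    by_cases h : pt e i < i <;> simp [h]

theorem R_diag {f : ℕ → ℕ} (hf : Computable f) (hm : StrictMono f) :
    ∃ e, ∀ s b, ¬ ∀ v ≥ s, R e (f v) = b := by
  obtain ⟨c, hc⟩ := Code.exists_code.1 (Partrec.nat_iff.1 hf.partrec)
  refine ⟨encode c, fun s b h => ?_⟩
  have hev : ∀ j, Code.eval c j = Part.some (f j) := fun j => by rw [hc]; rfl
  obtain ⟨k, hk⟩ := Code.evaln_complete.1 (show f s ∈ Code.eval c s by simp [hev])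
  set v := k + f s + s + 1 with hv
  set i := f v with hi
  have hvi : v ≤ i := hm.le_apply
  have hval : val (encode c) i s = f s := by
    have := Code.evaln_mono (show k ≤ i by omega) hk
    simp only [val, Denumerable.ofNat_encode]
    rw [Option.mem_def.1 this]; rfl
  set j := Nat.findGreatest (fun j => val (encode c) i j < i) i with hj
  have hsj : s ≤ j := Nat.le_findGreatest (by omega) (by rw [hval]; omega)
  have hlt : val (encode c) i j < i :=
    Nat.findGreatest_spec (P := fun j => val (encode c) i j < i) (m := s) (by omega)
      (by rw [hval]; omega)
  have hpt : pt (encode c) i = val (encode c) i j := rfl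
  have hfj : val (encode c) i j = f j := by
    have hlt2 := hlt
    simp only [val, Denumerable.ofNat_encode] at hlt2 ⊢
    rcases ho : Code.evaln i c j with _ | x
    · simp [ho] at hlt2
    · have := Code.evaln_sound (Option.mem_def.2 ho)
      rw [hev] at this
      simpa using this
  have h1 : R (encode c) i = b := h v (by omega)
  have h2 : R (encode c) (f j) = b := h j hsj
  have h3 := R_le (encode c) i
  rw [R, hpt, dif_pos hlt, hfj, h2] at h1
  have := R_le (encode c) (f j)
  omega

/-! ### The sequence -/

/-- ternary digits -/
def H (i : ℕ) : ℕ → ℕ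
  | 0 => 0
  | k + 1 => 3 * H i k + R k i

theorem primrec_H : Primrec₂ H := by
  refine (Primrec.nat_rec (f := fun _ : ℕ => 0)
    (g := fun i (p : ℕ × ℕ) => 3 * p.2 + R p.1 i) (Primrec.const 0) ?_).of_eq ?_
  · exact Primrec.nat_add.comp (Primrec.nat_mul.comp (Primrec.const 3)
      (Primrec.snd.comp Primrec.snd)) (primrec_R.comp (Primrec.fst.comp Primrec.snd) Primrec.fst)
  · intro i k
    induction k with
    | zero => rfl
    | succ k ih => simp only [H, ← ih]

theorem H_bound (i m t : ℕ) :
    H i m * 3 ^ t ≤ H i (m + t) ∧ 2 * H i (m + t) + 1 ≤ (2 * H i m + 1) * 3 ^ t := by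
  induction t with
  | zero => simp
  | succ t ih =>
    have := R_le (m + t) i
    rw [← add_assoc, H, pow_succ]
    constructor
    · nlinarith [ih.1]
    · nlinarith [ih.2]

/-- the sequence -/
def Y (i : ℕ) : ℚ := ((3 * H i i + 1 : ℕ) : ℚ) / ((3 ^ (i + 1) : ℕ) : ℚ)

theorem primrec_Y : Primrec Y := by
  refine primrec_div (n := fun i => 3 * H i i + 1) (d := fun i => 3 ^ (i + 1)) ?_ ?_ ?_ ?_
  · exact Primrec.succ.comp (Primrec.nat_mul.comp (Primrec.const 3)
      (primrec_H.comp Primrec.id Primrec.id))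
  · exact (Primrec₂.unpaired'.1 Nat.Primrec.pow).comp (Primrec.const 3) Primrec.succ
  · intro i; positivity
  · intro i
    apply Nat.Coprime.pow_right
    simp

theorem Y_bound {i m : ℕ} (h : m ≤ i) :
    (H i m : ℚ) ≤ Y i * 3 ^ m ∧ Y i * 3 ^ m < H i m + 1 / 2 := by
  obtain ⟨t, rfl⟩ := Nat.exists_eq_add_of_le h
  obtain ⟨h1, h2⟩ := H_bound (m + t) m t
  set a := H (m + t) m
  set b := H (m + t) (m + t) with hb
  have h1' : (a : ℚ) * 3 ^ t ≤ b := by exact_mod_cast h1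
  have h2' : 2 * (b : ℚ) + 1 ≤ (2 * a + 1) * 3 ^ t := by exact_mod_cast h2
  have h3 : Y (m + t) * 3 ^ m = (3 * b + 1) / (3 * 3 ^ t) := by
    simp only [Y, ← hb]
    push_cast
    rw [pow_succ, pow_add]
    field_simp
  have hp : (0 : ℚ) < 3 * 3 ^ t := by positivity
  rw [h3, le_div_iff₀ hp, div_lt_iff₀ hp]
  constructor <;> linarith

theorem H_eq {i k m : ℕ} (hi : m ≤ i) (hk : m ≤ k)
    (h : |Y i - Y k| < (2 : ℚ) ^ (-((2 * m + 1 : ℕ) : ℤ))) : H i m = H k m := by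
  obtain ⟨a1, a2⟩ := Y_bound hi
  obtain ⟨b1, b2⟩ := Y_bound hk
  have hpow : (2 : ℚ) ^ (-((2 * m + 1 : ℕ) : ℤ)) * 3 ^ m ≤ 1 / 2 := by
    rw [zpow_neg, zpow_natCast, pow_succ, pow_mul]
    have : (3 : ℚ) ^ m ≤ (2 ^ 2) ^ m := by gcongr; norm_num
    have h4 : (0 : ℚ) < (2 ^ 2) ^ m := by positivity
    rw [inv_mul_le_iff₀ (by positivity)]
    generalize ((2 : ℚ) ^ 2) ^ m = X at *
    linarith
  have h3 : (0 : ℚ) < 3 ^ m := by positivity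
  rw [abs_lt] at h
  have c1 := mul_lt_mul_of_pos_right h.1 h3
  have c2 := mul_lt_mul_of_pos_right h.2 h3
  have d1 : (H i m : ℚ) < H k m + 1 := by linarith
  have d2 : (H k m : ℚ) < H i m + 1 := by linarith
  have e1 : H i m < H k m + 1 := by exact_mod_cast d1
  have e2 : H k m < H i m + 1 := by exact_mod_cast d2
  omega

end NoCauchy

/-- There is a computable sequence of rationals in `[0,1]` with no computable
Cauchy subsequence: no computable strictly monotone `f` yields a subsequence
`(y_{f(j)})` satisfying the Cauchy condition. -/
theorem no_computable_cauchy_subsequence :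
    ∃ y : ℕ → ℚ, Computable y ∧ (∀ i, 0 ≤ y i ∧ y i ≤ 1) ∧
      ¬ ∃ f : ℕ → ℕ, Computable f ∧ StrictMono f ∧
        ∀ n : ℕ, ∃ s : ℕ, ∀ v ≥ s, ∀ w ≥ s,
          |y (f v) - y (f w)| < (2 : ℚ) ^ (-(n : ℤ)) := by
  refine ⟨NoCauchy.Y, NoCauchy.primrec_Y.to_comp, fun i => ?_, ?_⟩
  · obtain ⟨h1, h2⟩ := NoCauchy.Y_bound (Nat.zero_le i)
    simp only [NoCauchy.H, pow_zero, mul_one, Nat.cast_zero] at h1 h2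
    exact ⟨h1, by linarith⟩
  · rintro ⟨f, hf, hm, hC⟩
    obtain ⟨e, he⟩ := NoCauchy.R_diag hf hm
    obtain ⟨s, hs⟩ := hC (2 * (e + 1) + 1)
    set s' := max s (e + 1)
    refine he s' (NoCauchy.R e (f s')) fun v hv => ?_
    have hv1 : s ≤ v := le_trans (le_max_left _ _) hv
    have hv2 : e + 1 ≤ f v := (le_trans (le_max_right _ _) hv).trans hm.le_apply
    have hs2 : e + 1 ≤ f s' := (le_max_right _ _).trans hm.le_apply
    have h := NoCauchy.H_eq hv2 hs2 (hs v hv1 s' (le_max_left _ _))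
    simp only [NoCauchy.H] at h
    have := NoCauchy.R_le e (f v)
    have := NoCauchy.R_le e (f s')
    omega
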